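/- arXiv:2009.13713 — 2 statements merged into one kernel-verified Lean document; each statement's English description precedes it below -/
import Mathlib

section
/- Let (X, d) be a metric space with a finite Borel measure μ, and let (X, B, μ, f) be a measurable system. If the set of recurrent points of f has μ-measure zero, then f satisfies the Summability Condition (SC). -/
open MeasureTheory Set Filter
open scoped ENNReal NNReal

/-- The image of a set under the `n`-th power (`n ∈ ℤ`) of a bijection `f`. -/
def zimg {X : Type*} (f : X → X) (n : ℤ) (B : Set X) : Set X :=
  if 0 ≤ n then f^[n.toNat] '' B else f^[(-n).toNat] ⁻¹' B

/-- `W` is a wandering set for `f`: the sets `fⁿ(W)`, `n ∈ ℤ`, are pairwise disjoint. -/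
def Wandering {X : Type*} (f : X → X) (W : Set X) : Prop :=
  Pairwise fun m n : ℤ => Disjoint (zimg f m W) (zimg f n W)

/-- `W` generates `X`: `X = ⋃_{n ∈ ℤ} fⁿ(W)`. -/
def GeneratedBy {X : Type*} (f : X → X) (W : Set X) : Prop :=
  (⋃ n : ℤ, zimg f n W) = Set.univ

/-- The Summability Condition (SC). -/
def SCcond {X : Type*} [MeasurableSpace X] (μ : Measure X) (f : X → X) : Prop :=
  ∀ ε : ℝ≥0∞, 0 < ε → ∀ B : Set X, MeasurableSet B → μ B < ⊤ →
    ∃ B' : Set X, B' ⊆ B ∧ MeasurableSet B' ∧ μ (B \ B') < ε ∧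
      ∑' n : ℤ, μ (zimg f n B') ≠ ⊤

/-- A measurable system: `μ` σ-finite with `μ(X) > 0`, `f` bijective, bimeasurable,
nonsingular, and `μ(f⁻¹(B)) ≤ c·μ(B)` with `0 < c < ∞`. -/
def MeasSystem {X : Type*} [MeasurableSpace X] (μ : Measure X) (f : X → X) (c : ℝ≥0∞) : Prop :=
  SigmaFinite μ ∧ 0 < μ Set.univ ∧ Function.Bijective f ∧ Measurable f ∧
  (∀ B : Set X, MeasurableSet B → MeasurableSet (f '' B)) ∧
  (∀ B : Set X, MeasurableSet B → (μ (f ⁻¹' B) = 0 ↔ μ B = 0)) ∧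
  0 < c ∧ c ≠ ⊤ ∧ (∀ B : Set X, MeasurableSet B → μ (f ⁻¹' B) ≤ c * μ B)

/-- `f` is dissipative: there is a generating wandering set. -/
def Dissipative {X : Type*} [MeasurableSpace X] (f : X → X) : Prop :=
  ∃ W : Set X, MeasurableSet W ∧ Wandering f W ∧ GeneratedBy f W

/-- A set of natural numbers has positive lower density. -/
def PosLowerDensity (A : Set ℕ) : Prop :=
  0 < Filter.liminf (fun N : ℕ => ((A ∩ Set.Icc 1 N).ncard : ℝ) / N) Filter.atTop

/-- `x` is a recurrent point of `f`. -/
def Recurrent {X : Type*} [TopologicalSpace X] (f : X → X) (x : X) : Prop :=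
  ∀ U : Set X, IsOpen U → x ∈ U → ∃ n : ℕ, 1 ≤ n ∧ f^[n] x ∈ U

/-- A continuous linear operator is frequently hypercyclic. -/
def FreqHC {E : Type*} [NormedAddCommGroup E] [NormedSpace ℝ E] (T : E →L[ℝ] E) : Prop :=
  ∃ φ : E, ∀ U : Set E, IsOpen U → U.Nonempty → PosLowerDensity {n : ℕ | (T ^ n) φ ∈ U}

/-- `d(W) = ‖dμ/dν |_W‖_∞⁻¹`, with the convention `1/∞ = 0`. -/
noncomputable def dSeq {X : Type*} [MeasurableSpace X] (μ ν : Measure X) (W : Set X) : ℝ≥0∞ :=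
  (essSup (μ.rnDeriv ν) (μ.restrict W))⁻¹

/-!
In a separable space the sets `{x ∈ U | fⁿ x ∉ U for all n ≥ 1}`, with `U` in a countable base, are
wandering and cover the nonrecurrent points, and finitely many wandering sets exhaust `μ` up to `ε`;
the images of each of them have total mass at most `μ X`. Without separability, `X` is cut for each
mesh into well-ordered, possibly uncountably many cells by a map `p`. The points whose forward orbit
never returns to their own cell have pairwise distinct cells along each orbit, so those among them
with the least cell of their orbit form a wandering set.

That this set is null measurable is the main point: it involves sets `{x | x ∈ G (p x)}` with `G i`
Borel of unbounded rank. Each `G i` is the preimage of a Borel set `E i` of sequences under a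
continuous `φ i`, so the law of `x ↦ (p x, φ (p x) x)` lives on a product of a discrete space and a
standard Borel space. Disintegrating it over the first factor approximates each `E i` by open sets
from outside, and open sets glue measurably because the second factor is second countable.
-/

section SectionwiseMeasurable

variable {α Ω : Type*} [MeasurableSpace α] [DiscreteMeasurableSpace α] [MeasurableSpace Ω]
  {s : Set (α × Ω)}

theorem measurableSet_of_isOpen_section [TopologicalSpace Ω] [SecondCountableTopology Ω]
    [OpensMeasurableSpace Ω] (hs : ∀ a, IsOpen (Prod.mk a ⁻¹' s)) : MeasurableSet s := by
  have hbasis := TopologicalSpace.isBasis_countableBasis Ω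
  have hunion : s = ⋃ b ∈ TopologicalSpace.countableBasis Ω, {a | b ⊆ Prod.mk a ⁻¹' s} ×ˢ b := by
    ext ⟨a, z⟩
    simp only [mem_iUnion, mem_prod, mem_ofPred_eq, exists_prop]
    constructor
    · intro hz
      obtain ⟨b, hb, hzb, hbs⟩ := hbasis.exists_subset_of_mem_open hz (hs a)
      exact ⟨b, hb, hbs, hzb⟩
    · rintro ⟨b, -, hbs, hzb⟩
      exact hbs hzb
  rw [hunion]
  exact .biUnion (TopologicalSpace.countable_countableBasis Ω) fun b hb ↦
    MeasurableSet.of_discrete.prod (hbasis.isOpen hb).measurableSet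

theorem exists_measurableSet_superset_section_sdiff_null [TopologicalSpace Ω]
    [SecondCountableTopology Ω] [OpensMeasurableSpace Ω] (κ : α → Measure Ω)
    [∀ a, IsFiniteMeasure (κ a)] [∀ a, (κ a).OuterRegular]
    (hs : ∀ a, MeasurableSet (Prod.mk a ⁻¹' s)) :
    ∃ t, s ⊆ t ∧ MeasurableSet t ∧ ∀ a, κ a (Prod.mk a ⁻¹' (t \ s)) = 0 := by
  have happrox (n : ℕ) (a : α) := (hs a).exists_isOpen_sdiff_lt (measure_ne_top (κ a) _)
    (ENNReal.inv_ne_zero.2 (ENNReal.natCast_ne_top n))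
  choose U hsU hU _ hκU using happrox
  refine ⟨⋂ n, {q | q.2 ∈ U n q.1}, subset_iInter fun n q hq ↦ hsU n q.1 hq,
    .iInter fun n ↦ measurableSet_of_isOpen_section (hU n), fun a ↦ ?_⟩
  refine nonpos_iff_eq_zero.1 <| le_of_forall_gt fun r hr ↦ ?_
  obtain ⟨n, hn⟩ := ENNReal.exists_inv_nat_lt hr.ne'
  calc κ a (Prod.mk a ⁻¹' ((⋂ n, {q | q.2 ∈ U n q.1}) \ s))
      ≤ κ a (U n a \ Prod.mk a ⁻¹' s) :=
        measure_mono fun z hz ↦ ⟨mem_iInter.1 hz.1 n, hz.2⟩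
    _ < r := (hκU n a).trans hn

theorem nullMeasurableSet_of_measurableSet_section [StandardBorelSpace Ω] (ρ : Measure (α × Ω))
    [IsFiniteMeasure ρ] (hs : ∀ a, MeasurableSet (Prod.mk a ⁻¹' s)) : NullMeasurableSet s ρ := by
  rcases isEmpty_or_nonempty Ω with _ | _
  · exact .of_subsingleton
  let _ := upgradeStandardBorel Ω
  obtain ⟨t, hst, ht, htκ⟩ :=
    exists_measurableSet_superset_section_sdiff_null ρ.condKernel hs
  obtain ⟨u, hsu, hu, huκ⟩ :=
    exists_measurableSet_superset_section_sdiff_null ρ.condKernel (s := sᶜ) fun a ↦ (hs a).compl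
  have hnull : ρ (t ∩ u) = 0 := by
    rw [← Measure.lintegral_condKernel_mem (ht.inter hu)]
    refine lintegral_eq_zero_of_ae_eq_zero <| .of_forall fun a ↦
      measure_mono_null (fun z hz ↦ ?_) (measure_union_null (htκ a) (huκ a))
    by_cases hzs : (a, z) ∈ s
    · exact .inr ⟨hz.2, not_not_intro hzs⟩
    · exact .inl ⟨hz.1, hzs⟩
  have hts : ρ (t \ s) = 0 := measure_mono_null (inter_subset_inter_right t hsu) hnull
  have hst' : ρ (s \ t) = 0 := by rw [sdiff_eq_empty.2 hst, measure_empty]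
  exact ht.nullMeasurableSet.congr (ae_eq_set.2 ⟨hts, hst'⟩)

end SectionwiseMeasurable

section BorelSets

variable {X : Type*} [PseudoEMetricSpace X] [MeasurableSpace X]

theorem exists_continuous_preimage_eq_of_measurableSet [BorelSpace X] {s : Set X}
    (hs : MeasurableSet s) :
    ∃ φ : X → ℕ → ℝ≥0∞, Continuous φ ∧ ∃ E, MeasurableSet E ∧ φ ⁻¹' E = s := by
  rw [BorelSpace.measurable_eq (α := X), borel_eq_generateFrom_isClosed] at hs
  induction hs with
  | basic F hF =>
    refine ⟨fun x _ ↦ Metric.infEDist x F, by fun_prop, {z | z 0 = 0},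
      measurableSet_eq_fun (by fun_prop) (by fun_prop), ?_⟩
    ext x
    exact (Metric.mem_iff_infEDist_zero_of_closed hF).symm
  | empty => exact ⟨0, continuous_const, ∅, .empty, preimage_empty⟩
  | compl s _ ih =>
    obtain ⟨φ, hφ, E, hE, rfl⟩ := ih
    exact ⟨φ, hφ, Eᶜ, hE.compl, rfl⟩
  | iUnion s _ ih =>
    choose φ hφ E hE hs using ih
    refine ⟨fun x k ↦ φ k.unpair.1 x k.unpair.2, by fun_prop,
      ⋃ n, (fun z k ↦ z (Nat.pair n k)) ⁻¹' E n,
      .iUnion fun n ↦ (hE n).preimage (by fun_prop), ?_⟩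
    simp only [preimage_iUnion, preimage_preimage, Nat.unpair_pair, hs]

theorem measurableSet_iUnion_isClosed_inter_isOpen [OpensMeasurableSpace X] {ι : Type*}
    {F U : ι → Set X} (hF : LocallyFinite F) (hFc : ∀ i, IsClosed (F i))
    (hU : ∀ i, IsOpen (U i)) : MeasurableSet (⋃ i, F i ∩ U i) := by
  choose C hC _ hCU _ using fun i ↦ (hU i).exists_iUnion_isClosed
  have hunion : ⋃ i, F i ∩ U i = ⋃ n, ⋃ i, F i ∩ C i n := by
    simp only [← hCU, inter_iUnion]
    exact iUnion_comm _
  rw [hunion]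
  exact .iUnion fun n ↦ ((hF.subset fun i ↦ inter_subset_left).isClosed_iUnion
    fun i ↦ (hFc i).inter (hC i n)).measurableSet

end BorelSets

/-- A labelling `p : X → ι`, equivalently the partition of `X` into the cells `{p = i}`, along
which closed sets can be glued: if `X` is given the closed set `G i` on the cell `{p = i}`, the
resulting set is measurable. There is no σ-algebra on `ι`, which may be uncountable. -/
def GluesClosed {X ι : Type*} [TopologicalSpace X] [MeasurableSpace X] (p : X → ι) : Prop :=
  ∀ G : ι → Set X, (∀ i, IsClosed (G i)) → MeasurableSet {x | x ∈ G (p x)}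

theorem GluesClosed.measurableSet_preimage {X ι : Type*} [TopologicalSpace X] [MeasurableSpace X]
    {p : X → ι} (hp : GluesClosed p) (S : Set ι) : MeasurableSet (p ⁻¹' S) :=
  hp (fun i ↦ {_x | i ∈ S}) fun _ ↦ isClosed_const

section GluesClosed

variable {X ι : Type*} [PseudoEMetricSpace X] [MeasurableSpace X]

theorem GluesClosed.nullMeasurableSet [BorelSpace X] {p : X → ι} (hp : GluesClosed p)
    (μ : Measure X) [IsFiniteMeasure μ] {G : ι → Set X} (hG : ∀ i, MeasurableSet (G i)) :
    NullMeasurableSet {x | x ∈ G (p x)} μ := by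
  choose φ hφ E hE hφE using fun i ↦ exists_continuous_preimage_eq_of_measurableSet (hG i)
  let _ : MeasurableSpace ι := ⊤
  have hmeas : Measurable fun x ↦ (p x, φ (p x) x) :=
    Measurable.prodMk (fun S _ ↦ hp.measurableSet_preimage S) <|
      measurable_of_isClosed fun F hF ↦ hp (fun i ↦ φ i ⁻¹' F) fun i ↦ hF.preimage (hφ i)
  have hnull := (nullMeasurableSet_of_measurableSet_section (μ.map _)
    (s := {q | q.2 ∈ E q.1}) hE).preimage (hmeas.quasiMeasurePreserving μ)
  simp only [← hφE]
  exact hnull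

theorem GluesClosed.nullMeasurableSet_rel [BorelSpace X] {p : X → ι} (hp : GluesClosed p)
    (μ : Measure X) [IsFiniteMeasure μ] (r : ι → ι → Prop) {g : X → X} (hg : Measurable g) :
    NullMeasurableSet {x | r (p x) (p (g x))} μ :=
  hp.nullMeasurableSet μ (G := fun i ↦ {x | r i (p (g x))}) fun i ↦
    hg (hp.measurableSet_preimage {j | r i j})

theorem exists_gluesClosed_mem_cover [OpensMeasurableSpace X] [LinearOrder ι] [WellFoundedLT ι]
    {U : ι → Set X} (hU : ∀ i, IsOpen (U i)) (hcov : ⋃ i, U i = univ) :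
    ∃ p : X → ι, GluesClosed p ∧ ∀ x, x ∈ U (p x) := by
  obtain ⟨V, hVo, hVcov, hVfin, hVU⟩ := precise_refinement U hU hcov
  obtain ⟨K, hKcov, hKc, hKV⟩ := exists_iUnion_eq_closed_subset hVo hVfin.point_finite hVcov
  have hKfin : LocallyFinite K := hVfin.subset hKV
  have hmin (x : X) : ∃ i, x ∈ K i ∧ ∀ j < i, x ∉ K j := by
    obtain ⟨i, hi, hlt⟩ := wellFounded_lt.has_min {i | x ∈ K i} (iUnion_eq_univ_iff.1 hKcov x)
    exact ⟨i, hi, fun j hji hj ↦ hlt j hj hji⟩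
  choose p hpK hpmin using hmin
  refine ⟨p, fun G hG ↦ ?_, fun x ↦ hVU _ (hKV _ (hpK x))⟩
  have hunion : {x | x ∈ G (p x)} = ⋃ i, (K i ∩ G i) ∩ (⋃ j : Iio i, K j)ᶜ := by
    ext x
    simp only [mem_ofPred_eq, mem_iUnion, mem_inter_iff, mem_compl_iff, not_exists, Subtype.forall,
      mem_Iio]
    refine ⟨fun hx ↦ ⟨p x, ⟨hpK x, hx⟩, hpmin x⟩, fun ⟨i, ⟨hiK, hiG⟩, himin⟩ ↦ ?_⟩
    have hpi : p x = i := le_antisymm (not_lt.1 fun hlt ↦ hpmin x i hlt hiK)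
      (not_lt.1 fun hlt ↦ himin (p x) hlt (hpK x))
    rwa [hpi]
  rw [hunion]
  refine measurableSet_iUnion_isClosed_inter_isOpen (hKfin.subset fun i ↦ inter_subset_left)
    (fun i ↦ (hKc i).inter (hG i)) fun i ↦ isOpen_compl_iff.2 ?_
  exact (hKfin.comp_injective Subtype.val_injective).isClosed_iUnion fun j ↦ hKc j.1

theorem exists_seq_gluesClosed (X : Type*) [PseudoEMetricSpace X] [MeasurableSpace X]
    [OpensMeasurableSpace X] [LinearOrder X] [WellFoundedLT X] :
    ∃ p : ℕ → X → X, (∀ k, GluesClosed (p k)) ∧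
      ∀ U : Set X, IsOpen U → ∀ x ∈ U, ∃ k, ∀ y, p k y = p k x → y ∈ U := by
  have hr (k : ℕ) : 0 < (k : ℝ≥0∞)⁻¹ / 2 := by simp
  choose p hp hdist using fun k : ℕ ↦ exists_gluesClosed_mem_cover
    (U := fun z : X ↦ Metric.eball z ((k : ℝ≥0∞)⁻¹ / 2)) (fun z ↦ Metric.isOpen_eball)
    (iUnion_eq_univ_iff.2 fun x ↦ ⟨x, Metric.mem_eball_self (hr k)⟩)
  refine ⟨p, hp, fun U hU x hx ↦ ?_⟩
  obtain ⟨r, hr, hball⟩ := EMetric.isOpen_iff.1 hU x hx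
  obtain ⟨k, hk⟩ := ENNReal.exists_inv_nat_lt hr.ne'
  refine ⟨k, fun y hy ↦ hball ?_⟩
  calc edist y x ≤ edist y (p k x) + edist x (p k x) := edist_triangle_right ..
    _ < (k : ℝ≥0∞)⁻¹ / 2 + (k : ℝ≥0∞)⁻¹ / 2 := ENNReal.add_lt_add (hy ▸ hdist k y) (hdist k x)
    _ = (k : ℝ≥0∞)⁻¹ := ENNReal.add_halves _
    _ < r := hk

end GluesClosed

section Wandering

variable {X : Type*} {e : Equiv.Perm X} {V W : Set X}

theorem zimg_eq_preimage_zpow (e : Equiv.Perm X) (n : ℤ) (B : Set X) :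
    zimg e n B = ⇑(e ^ (-n)) ⁻¹' B := by
  unfold zimg
  split_ifs with hn
  · lift n to ℕ using hn
    rw [Int.toNat_natCast, Equiv.Perm.iterate_eq_pow, zpow_neg, zpow_natCast]
    exact Equiv.image_eq_preimage_symm _ _
  · rw [Equiv.Perm.iterate_eq_pow, ← zpow_natCast, Int.toNat_of_nonneg (by lia)]

theorem zimg_mono (e : Equiv.Perm X) (n : ℤ) (hVW : V ⊆ W) : zimg e n V ⊆ zimg e n W := by
  simpa only [zimg_eq_preimage_zpow] using preimage_mono hVW

theorem Wandering.mono (hW : Wandering e W) (hVW : V ⊆ W) : Wandering e V :=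
  fun m n hmn ↦ (hW hmn).mono (zimg_mono e m hVW) (zimg_mono e n hVW)

theorem Wandering.preimage_zpow (hW : Wandering e W) (k : ℤ) :
    Wandering e (⇑(e ^ k) ⁻¹' W) := by
  have hshift (n : ℤ) : zimg e n (⇑(e ^ k) ⁻¹' W) = zimg e (n - k) W := by
    simp only [zimg_eq_preimage_zpow, ← preimage_comp, ← Equiv.Perm.coe_mul, ← zpow_add]
    rw [neg_sub, sub_eq_add_neg]
  intro m n hmn
  simp only [hshift]
  exact hW (sub_left_injective.ne hmn)

theorem wandering_of_forall_zpow_notMem (hW : ∀ x ∈ W, ∀ n : ℤ, n ≠ 0 → (e ^ n) x ∉ W) :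
    Wandering e W := by
  intro m n hmn
  simp only [zimg_eq_preimage_zpow]
  refine disjoint_left.2 fun x hm hn ↦ hW _ hm (m - n) (sub_ne_zero.2 hmn) ?_
  rw [← Equiv.Perm.mul_apply, ← zpow_add, show m - n + -m = -n by ring]
  exact hn

end Wandering

section Summability

variable {X ι : Type*} [MeasurableSpace X] {μ : Measure X} {e : Equiv.Perm X}

theorem Wandering.tsum_measure_zimg_le {W : Set X} (hW : Wandering e W)
    (he : ∀ n : ℤ, Measurable ⇑(e ^ n)) (hWm : MeasurableSet W) (μ : Measure X) :
    ∑' n : ℤ, μ (zimg e n W) ≤ μ univ := by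
  refine tsum_measure_le_measure_univ (fun n ↦ ?_) fun m n hmn ↦ (hW hmn).aedisjoint
  rw [zimg_eq_preimage_zpow]
  exact (he (-n) hWm).nullMeasurableSet

theorem tsum_measure_zimg_biUnion_ne_top [IsFiniteMeasure μ] {W : ι → Set X}
    (he : ∀ n : ℤ, Measurable ⇑(e ^ n)) (hWm : ∀ i, MeasurableSet (W i))
    (hW : ∀ i, Wandering e (W i)) (s : Finset ι) :
    ∑' n : ℤ, μ (zimg e n (⋃ i ∈ s, W i)) ≠ ∞ := by
  refine ne_top_of_le_ne_top (b := ∑ _i ∈ s, μ univ) (by simp [ENNReal.mul_eq_top]) ?_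
  calc ∑' n : ℤ, μ (zimg e n (⋃ i ∈ s, W i))
      ≤ ∑' n : ℤ, ∑ i ∈ s, μ (zimg e n (W i)) := by
        refine ENNReal.tsum_le_tsum fun n ↦ ?_
        simp only [zimg_eq_preimage_zpow, preimage_iUnion₂]
        exact measure_biUnion_finset_le _ _
    _ = ∑ i ∈ s, ∑' n : ℤ, μ (zimg e n (W i)) :=
        Summable.tsum_finsetSum fun _ _ ↦ ENNReal.summable
    _ ≤ ∑ _i ∈ s, μ univ :=
        Finset.sum_le_sum fun i _ ↦ (hW i).tsum_measure_zimg_le he (hWm i) μ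

theorem exists_finset_measure_sdiff_biUnion_lt [Countable ι] {T : ι → Set X} {B : Set X}
    (hT : ∀ i, NullMeasurableSet (T i) μ) (hcov : ∀ᵐ x ∂μ, ∃ i, x ∈ T i)
    (hB : NullMeasurableSet B μ) (hBfin : μ B ≠ ∞) {ε : ℝ≥0∞} (hε : 0 < ε) :
    ∃ s : Finset ι, μ (B \ ⋃ i ∈ s, T i) < ε := by
  have hlim := tendsto_measure_iInter_atTop (μ := μ) (s := fun s : Finset ι ↦ B \ ⋃ i ∈ s, T i)
    (fun s ↦ hB.diff (s.nullMeasurableSet_biUnion fun i _ ↦ hT i))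
    (fun s t hst ↦ sdiff_subset_sdiff_right (biUnion_subset_biUnion_left hst)) ⟨∅, by simpa⟩
  have hnull : μ (⋂ s : Finset ι, B \ ⋃ i ∈ s, T i) = 0 := by
    refine measure_mono_null (fun x hx ↦ ?_) (ae_iff.1 hcov)
    rintro ⟨i, hi⟩
    exact (mem_iInter.1 hx {i}).2 (by simpa using hi)
  rw [hnull] at hlim
  exact (hlim.eventually_lt_const hε).exists

theorem SCcond.of_wandering_cover [Countable ι] [IsFiniteMeasure μ] {W : ι → Set X}
    (he : ∀ n : ℤ, Measurable ⇑(e ^ n)) (hWm : ∀ i, NullMeasurableSet (W i) μ)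
    (hW : ∀ i, Wandering e (W i)) (hcov : ∀ᵐ x ∂μ, ∃ i, x ∈ W i) : SCcond μ e := by
  choose T hTW hTm hTae using fun i ↦ (hWm i).exists_measurable_subset_ae_eq
  have hTcov : ∀ᵐ x ∂μ, ∃ i, x ∈ T i := by
    filter_upwards [hcov, ae_all_iff.2 fun i ↦ (hTae i).mem_iff] with x ⟨i, hi⟩ hx
    exact ⟨i, (hx i).2 hi⟩
  intro ε hε B hB hBfin
  obtain ⟨s, hs⟩ := exists_finset_measure_sdiff_biUnion_lt (fun i ↦ (hTm i).nullMeasurableSet)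
    hTcov hB.nullMeasurableSet hBfin.ne hε
  refine ⟨B ∩ ⋃ i ∈ s, T i, inter_subset_left,
    hB.inter (s.measurableSet_biUnion fun i _ ↦ hTm i), by rwa [sdiff_self_inter], ?_⟩
  exact ne_top_of_le_ne_top
    (tsum_measure_zimg_biUnion_ne_top (μ := μ) he hTm (fun i ↦ (hW i).mono (hTW i)) s)
    (ENNReal.tsum_le_tsum fun n ↦ measure_mono (zimg_mono e n inter_subset_right))

end Summability

/-- The points whose forward orbit under `f` never returns to their own cell of the partition
of `X` into the fibres of `p`. -/
def nonreturning {X ι : Type*} (f : X → X) (p : X → ι) : Set X :=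
  {x | ∀ n : ℕ, 1 ≤ n → p x ≠ p (f^[n] x)}

/-- The nonreturning points with the least label among all nonreturning points of their two-sided
orbit. There is at most one on each orbit. -/
def leastNonreturning {X ι : Type*} [LE ι] (e : Equiv.Perm X) (p : X → ι) : Set X :=
  {x ∈ nonreturning e p | ∀ n : ℤ, (e ^ n) x ∈ nonreturning e p → p x ≤ p ((e ^ n) x)}

section Nonreturning

variable {X ι : Type*}

theorem wandering_leastNonreturning [PartialOrder ι] (e : Equiv.Perm X) (p : X → ι) :
    Wandering e (leastNonreturning e p) := by
  refine wandering_of_forall_zpow_notMem fun x ⟨hx, hxmin⟩ n hn ⟨hy, hymin⟩ ↦ ?_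
  have hback : (e ^ (-n)) ((e ^ n) x) = x := by simp
  have hpeq : p x = p ((e ^ n) x) :=
    le_antisymm (hxmin n hy) (by simpa only [hback] using hymin (-n) (by rwa [hback]))
  rcases le_total 0 n with hn₀ | hn₀
  · refine hx n.toNat (by lia) ?_
    rwa [Equiv.Perm.iterate_eq_pow, ← zpow_natCast, Int.toNat_of_nonneg hn₀]
  · refine hy (-n).toNat (by lia) ?_
    rw [Equiv.Perm.iterate_eq_pow, ← zpow_natCast, Int.toNat_of_nonneg (by lia), hback, hpeq]

theorem exists_zpow_mem_leastNonreturning [LinearOrder ι] [WellFoundedLT ι] {e : Equiv.Perm X}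
    {p : X → ι} {x : X} (hx : x ∈ nonreturning e p) :
    ∃ n : ℤ, (e ^ n) x ∈ leastNonreturning e p := by
  obtain ⟨n, hn, hmin⟩ := (wellFounded_lt.onFun (f := fun n : ℤ ↦ p ((e ^ n) x))).has_min
    {n : ℤ | (e ^ n) x ∈ nonreturning e p} ⟨0, hx⟩
  refine ⟨n, hn, fun k hk ↦ not_lt.1 ?_⟩
  rw [← Equiv.Perm.mul_apply, ← zpow_add] at hk ⊢
  exact hmin (k + n) hk

variable [PseudoEMetricSpace X] [MeasurableSpace X] [BorelSpace X] {p : X → ι}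

theorem GluesClosed.nullMeasurableSet_nonreturning (hp : GluesClosed p) {f : X → X}
    (hf : Measurable f) (μ : Measure X) [IsFiniteMeasure μ] :
    NullMeasurableSet (nonreturning f p) μ := by
  simp only [nonreturning, ofPred_forall]
  exact .iInter fun n ↦ .iInter fun _ ↦ hp.nullMeasurableSet_rel μ (· ≠ ·) (hf.iterate n)

theorem GluesClosed.nullMeasurableSet_leastNonreturning [LE ι] (hp : GluesClosed p)
    {e : Equiv.Perm X} (he : ∀ n : ℤ, Measurable ⇑(e ^ n)) (μ : Measure X) [IsFiniteMeasure μ] :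
    NullMeasurableSet (leastNonreturning e p) μ := by
  have hN (ν : Measure X) [IsFiniteMeasure ν] : NullMeasurableSet (nonreturning e p) ν :=
    hp.nullMeasurableSet_nonreturning (by simpa only [zpow_one] using he 1) ν
  have hinter : leastNonreturning e p = nonreturning e p ∩
      ⋂ n : ℤ, ((⇑(e ^ n) ⁻¹' nonreturning e p)ᶜ ∪ {x | p x ≤ p ((e ^ n) x)}) := by
    ext x
    simp [leastNonreturning, imp_iff_not_or]
  rw [hinter]
  -- `μ` need not be quasi-invariant, so `nonreturning e p` is pulled back from `μ.map (e ^ n)`.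
  exact (hN μ).inter <| .iInter fun n ↦
    ((hN _).preimage ((he n).quasiMeasurePreserving μ)).compl.union
      (hp.nullMeasurableSet_rel μ (· ≤ ·) (he n))

end Nonreturning

theorem measurable_toEquiv_zpow {X : Type*} [MeasurableSpace X] (e : X ≃ᵐ X) (n : ℤ) :
    Measurable ⇑(e.toEquiv ^ n : Equiv.Perm X) := by
  obtain ⟨m, rfl | rfl⟩ := n.eq_nat_or_neg
  · rw [zpow_natCast, ← Equiv.Perm.iterate_eq_pow]
    exact e.measurable.iterate m
  · rw [zpow_neg, zpow_natCast, ← inv_pow, ← Equiv.Perm.iterate_eq_pow]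
    exact e.symm.measurable.iterate m

theorem stmt_2_general {X : Type*} [PseudoEMetricSpace X] [MeasurableSpace X] [BorelSpace X]
    (μ : Measure X) [IsFiniteMeasure μ] (e : X ≃ᵐ X) (hrec : μ {x | Recurrent e x} = 0) :
    SCcond μ e := by
  obtain ⟨_, _⟩ := exists_wellFoundedLT X
  obtain ⟨p, hp, hsep⟩ := exists_seq_gluesClosed X
  have hnonreturning (x : X) (hx : ¬ Recurrent e x) : ∃ k, x ∈ nonreturning e (p k) := by
    simp only [Recurrent, not_forall, not_exists, not_and] at hx
    obtain ⟨U, hU, hxU, hescape⟩ := hx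
    obtain ⟨k, hk⟩ := hsep U hU x hxU
    exact ⟨k, fun n hn hret ↦ hescape n hn (hk _ hret.symm)⟩
  let f : Equiv.Perm X := e.toEquiv
  have hf : ∀ n : ℤ, Measurable ⇑(f ^ n) := measurable_toEquiv_zpow e
  let W (i : ℕ × ℤ) : Set X := ⇑(f ^ i.2) ⁻¹' leastNonreturning f (p i.1)
  have hWm (i : ℕ × ℤ) : NullMeasurableSet (W i) μ :=
    ((hp i.1).nullMeasurableSet_leastNonreturning hf _).preimage
      ((hf i.2).quasiMeasurePreserving μ)
  have hW (i : ℕ × ℤ) : Wandering f (W i) := (wandering_leastNonreturning f _).preimage_zpow i.2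
  refine SCcond.of_wandering_cover hf hWm hW ?_
  filter_upwards [measure_eq_zero_iff_ae_notMem.1 hrec] with x hx
  obtain ⟨k, hk⟩ := hnonreturning x hx
  obtain ⟨n, hn⟩ := exists_zpow_mem_leastNonreturning (e := f) hk
  exact ⟨(k, n), hn⟩

theorem MeasSystem.exists_measurableEquiv {X : Type*} [MeasurableSpace X] {μ : Measure X}
    {f : X → X} {c : ℝ≥0∞} (hsys : MeasSystem μ f c) : ∃ e : X ≃ᵐ X, ⇑e = f := by
  obtain ⟨-, -, hbij, hf, himg, -⟩ := hsys
  have hsymm : Measurable (Equiv.ofBijective f hbij).symm := fun B hB ↦ by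
    rw [← Equiv.image_eq_preimage_symm]
    exact himg B hB
  exact ⟨⟨.ofBijective f hbij, hf, hsymm⟩, rfl⟩

/-- If `X` is a metric space with a finite Borel measure `μ`, `(X, B, μ, f)` is
a measurable system, and the set of recurrent points of `f` has `μ`-measure zero, then `f`
satisfies Condition (SC). -/
theorem stmt_2 {X : Type*} [MetricSpace X] [MeasurableSpace X] [BorelSpace X]
    (μ : Measure X) (f : X → X) (c : ℝ≥0∞) (hsys : MeasSystem μ f c)
    (hfin : μ Set.univ ≠ ⊤) (hrec : μ {x : X | Recurrent f x} = 0) :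
    SCcond μ f := by
  have : IsFiniteMeasure μ := ⟨hfin.lt_top⟩
  obtain ⟨e, rfl⟩ := hsys.exists_measurableEquiv
  exact stmt_2_general μ e hrec
end

section
/- Let (X, B, μ, f) be a measurable system and p ≥ 1, and suppose the composition operator T_f : L^p(X) → L^p(X), T_f(φ) = φ∘f, is frequently hypercyclic. Then for every wandering set W with 0 < μ(W) < ∞, we have ∑_{n∈ℤ} ‖ dμ/d(μ∘fⁿ) |_W ‖_∞^{-1} < ∞. -/
open MeasureTheory Set Filter
open scoped ENNReal NNReal

/-!
Let `φ` have a frequently hypercyclic orbit, let `A = {|φ| ≥ 1/2}`, and let `E` be the set of times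
`n` at which `Tⁿφ` is so close to the indicator of `W` that `μ(f⁻ⁿ(A) ∆ W) ≤ μ(W)/2`. Write `d_k`
for the `k`-th term of the series. If `n` and `n + k` lie in `E`, then `fᵏ(W ∩ f⁻ⁿ⁻ᵏ(A))` is a
subset of `f⁻ⁿ(A)` of measure at least `d_k μ(W)/2`. For fixed `n` these subsets are disjoint
because `W` is wandering, so `∑ d_k ≤ 3` when the sum is over the `k` with `n + k ∈ E`.

Averaging over `n ∈ E` with respect to an invariant mean `m` on `ℤ` such that `m(E) > 0` gives
`∑ d_k m(E ∩ (E - k)) ≤ 3`, where `k` now ranges over all of `ℤ`. By Følner's argument, the integers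
`k` with `m(E ∩ (E - k)) ≥ δ` have bounded gaps for some `δ > 0`, and the bound `d_k ≤ c d_{k+1}`
carries the estimate across the gaps. Only the positive upper density of `E` is needed.
-/

open scoped Pointwise Topology symmDiff

section AddContent

variable {X : Type*} {𝒞 : Set (Set X)} {m : AddContent ℝ≥0∞ 𝒞}

-- This is the pointwise bound integrated over `S`; the constant `a` collects the weights of the
-- indicators that are constant on the piece of `S` reached in the induction.
theorem sum_mul_addContent_inter_le (h𝒞 : IsSetRing 𝒞) {ι : Type*} (I : Finset ι) (w : ι → ℝ≥0∞)
    {A : ι → Set X} (hA : ∀ i, A i ∈ 𝒞) {b : ℝ≥0∞} :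
    ∀ {S : Set X} {a : ℝ≥0∞}, S ∈ 𝒞 → (∀ x ∈ S, a + ∑ i ∈ I, (A i).indicator (fun _ ↦ w i) x ≤ b) →
      a * m S + ∑ i ∈ I, w i * m (S ∩ A i) ≤ b * m S := by
  classical
  induction I using Finset.induction with
  | empty =>
    intro S a _ h
    obtain rfl | ⟨x, hx⟩ := S.eq_empty_or_nonempty
    · simp
    · simpa using mul_le_mul_left (by simpa using h x hx) (m S)
  | insert i I hi ih =>
    intro S a hS h
    have split (Y : Set X) (hY : Y ∈ 𝒞) : m Y = m (Y ∩ A i) + m (Y \ A i) := by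
      rw [← addContent_union h𝒞 (h𝒞.inter_mem hY (hA i)) (h𝒞.sdiff_mem hY (hA i))
        disjoint_inf_sdiff, inter_union_sdiff]
    have inside := ih (S := S ∩ A i) (a := a + w i) (h𝒞.inter_mem hS (hA i)) fun x hx ↦ by
      simpa [Finset.sum_insert hi, hx.2, add_assoc] using h x hx.1
    have outside := ih (S := S \ A i) (a := a) (h𝒞.sdiff_mem hS (hA i)) fun x hx ↦ by
      simpa [Finset.sum_insert hi, hx.2] using h x hx.1
    have split_inter (j : ι) : m (S ∩ A j) = m (S ∩ A i ∩ A j) + m (S \ A i ∩ A j) := by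
      rw [split _ (h𝒞.inter_mem hS (hA j)), inter_right_comm, inter_sdiff_right_comm]
    calc a * m S + ∑ j ∈ insert i I, w j * m (S ∩ A j)
        = ((a + w i) * m (S ∩ A i) + ∑ j ∈ I, w j * m (S ∩ A i ∩ A j)) +
            (a * m (S \ A i) + ∑ j ∈ I, w j * m (S \ A i ∩ A j)) := by
          simp only [Finset.sum_insert hi, split S hS, split_inter, mul_add, add_mul,
            Finset.sum_add_distrib]
          ring
      _ ≤ b * m (S ∩ A i) + b * m (S \ A i) := add_le_add inside outside
      _ = b * m S := by rw [← mul_add, ← split S hS]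

theorem sum_addContent_le_add_sum_inter (h𝒞 : IsSetRing 𝒞) {ι : Type*} [DecidableEq ι]
    (I : Finset ι) {A : ι → Set X} (hA : ∀ i, A i ∈ 𝒞) :
    ∑ i ∈ I, m (A i) ≤ m (⋃ i ∈ I, A i) + ∑ i ∈ I, ∑ j ∈ I.erase i, m (A i ∩ A j) := by
  have overlap_mem (i : ι) : ⋃ j ∈ I.erase i, A i ∩ A j ∈ 𝒞 :=
    h𝒞.biUnion_mem _ fun j _ ↦ h𝒞.inter_mem (hA i) (hA j)
  set D : ι → Set X := fun i ↦ A i \ ⋃ j ∈ I.erase i, A i ∩ A j with hD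
  have D_mem (i : ι) : D i ∈ 𝒞 := h𝒞.sdiff_mem (hA i) (overlap_mem i)
  have D_disjoint : (I : Set ι).PairwiseDisjoint D := by
    intro i _ j hj hij
    refine disjoint_left.2 fun x hxi hxj ↦ hxi.2 ?_
    simp only [mem_iUnion, Finset.mem_erase]
    exact ⟨j, ⟨hij.symm, hj⟩, hxi.1, hxj.1⟩
  calc ∑ i ∈ I, m (A i)
      ≤ ∑ i ∈ I, (m (D i) + ∑ j ∈ I.erase i, m (A i ∩ A j)) := by
        refine Finset.sum_le_sum fun i _ ↦ ?_
        calc m (A i) ≤ m (D i ∪ ⋃ j ∈ I.erase i, A i ∩ A j) :=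
              addContent_mono h𝒞.isSetSemiring (hA i) (h𝒞.union_mem (D_mem i) (overlap_mem i))
                (by rw [hD, sdiff_union_self]; exact subset_union_left)
          _ ≤ _ := (addContent_union_le h𝒞 (D_mem i) (overlap_mem i)).trans <| by
              gcongr
              exact addContent_biUnion_le h𝒞 fun j _ ↦ h𝒞.inter_mem (hA i) (hA j)
    _ = m (⋃ i ∈ I, D i) + ∑ i ∈ I, ∑ j ∈ I.erase i, m (A i ∩ A j) := by
        rw [Finset.sum_add_distrib, addContent_biUnion_eq h𝒞 (fun i _ ↦ D_mem i) D_disjoint]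
    _ ≤ _ := by
        gcongr
        exact addContent_mono h𝒞.isSetSemiring (h𝒞.biUnion_mem _ fun i _ ↦ D_mem i)
          (h𝒞.biUnion_mem _ fun i _ ↦ hA i) (iUnion₂_mono fun i _ ↦ sdiff_subset)

theorem exists_le_addContent_inter (h𝒞 : IsSetRing 𝒞) {M a : ℝ≥0∞} (hM : M ≠ ⊤)
    (hmM : ∀ s ∈ 𝒞, m s ≤ M) (ha : a ≠ 0) :
    ∃ δ : ℝ≥0∞, δ ≠ 0 ∧ ∀ A : ℕ → Set X, (∀ n, A n ∈ 𝒞) → (∀ n, a ≤ m (A n)) →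
      ∃ i j, i ≠ j ∧ δ ≤ m (A i ∩ A j) := by
  obtain ⟨r, hr⟩ := ENNReal.exists_nat_mul_gt (ENNReal.half_pos ha).ne' hM
  refine ⟨a / 2 / r, by simp [ha], fun A hA haA ↦ ?_⟩
  have a_ne_top : a ≠ ⊤ := ne_top_of_le_ne_top hM ((haA 0).trans (hmM _ (hA 0)))
  by_contra! small
  have h : r * (a / 2) + r * (a / 2) ≤ M + r * (a / 2) :=
    calc r * (a / 2) + r * (a / 2)
        = ∑ _i ∈ Finset.range r, a := by simp [← mul_add]
      _ ≤ ∑ i ∈ Finset.range r, m (A i) := Finset.sum_le_sum fun i _ ↦ haA i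
      _ ≤ m (⋃ i ∈ Finset.range r, A i) +
            ∑ i ∈ Finset.range r, ∑ j ∈ (Finset.range r).erase i, m (A i ∩ A j) :=
          sum_addContent_le_add_sum_inter h𝒞 _ hA
      _ ≤ M + ∑ i ∈ Finset.range r, ∑ j ∈ Finset.range r, a / 2 / r := by
          gcongr with i
          · exact hmM _ (h𝒞.biUnion_mem _ fun i _ ↦ hA i)
          · exact (Finset.sum_le_sum fun j hj ↦
              (small i j (Finset.ne_of_mem_erase hj).symm).le).trans
                (Finset.sum_le_sum_of_subset (Finset.erase_subset _ _))
      _ ≤ M + r * (a / 2) := by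
          simp only [Finset.sum_const, Finset.card_range, nsmul_eq_mul]
          gcongr
          exact ENNReal.mul_div_le
  exact hr.not_ge <| (ENNReal.add_le_add_iff_right
    (ENNReal.mul_ne_top (ENNReal.natCast_ne_top r) (ENNReal.div_ne_top a_ne_top two_ne_zero))).1 h

end AddContent

/-- A mean (finitely additive probability defined on all subsets of `X`) that is invariant under an
action of the additive group `G` on `X`. -/
structure IsInvariantMean (G : Type*) {X : Type*} [AddGroup G] [AddAction G X]
    (m : AddContent ℝ≥0∞ (univ : Set (Set X))) : Prop where
  univ_eq_one : m univ = 1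
  vadd (g : G) (s : Set X) : m (g +ᵥ s) = m s

theorem isSetRing_univ {X : Type*} : IsSetRing (univ : Set (Set X)) where
  empty_mem := mem_univ _
  union_mem _ _ _ _ := mem_univ _
  sdiff_mem _ _ _ _ := mem_univ _

theorem exists_isInvariantMean_of_isAddFoelner {G X ι : Type*} [AddGroup G] [AddAction G X]
    [MeasurableSpace X] [DiscreteMeasurableSpace X] {μ : Measure X} [VAddInvariantMeasure G X μ]
    {F : ι → Set X} {u : Ultrafilter ι} (hF : IsAddFoelner G μ u F) :
    ∃ m : AddContent ℝ≥0∞ (univ : Set (Set X)), IsInvariantMean G m ∧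
      ∀ s, Tendsto (fun i ↦ μ (s ∩ F i) / μ (F i)) u (𝓝 (m s)) := by
  refine ⟨isSetRing_univ.addContent_of_union (IsAddFoelner.mean μ u F) ?_ fun {s t} _ _ hst ↦
    hF.mean_union_eq_add_of_disjoint s t .of_discrete hst,
    ⟨hF.mean_univ_eq_zero, hF.mean_vadd_eq_mean⟩, hF.tendsto_nhds_mean⟩
  exact tendsto_nhds_unique (hF.tendsto_nhds_mean ∅) (by simp)

namespace IsInvariantMean

variable {G X : Type*} [AddGroup G] [AddAction G X] {m : AddContent ℝ≥0∞ (univ : Set (Set X))}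

theorem le_one (hm : IsInvariantMean G m) (s : Set X) : m s ≤ 1 :=
  hm.univ_eq_one ▸ addContent_mono isSetRing_univ.isSetSemiring (mem_univ _) (mem_univ _)
    (subset_univ s)

theorem inter_vadd (hm : IsInvariantMean G m) (g h : G) (s : Set X) :
    m ((g +ᵥ s) ∩ (h +ᵥ s)) = m (s ∩ ((-g + h) +ᵥ s)) := by
  rw [← hm.vadd (-g), vadd_set_inter, neg_vadd_vadd, vadd_vadd]

theorem exists_finset_forall_le_inter_vadd (hm : IsInvariantMean G m) {s : Set X} (hs : m s ≠ 0) :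
    ∃ (T : Finset G) (δ : ℝ≥0∞), δ ≠ 0 ∧ ∀ g, ∃ t ∈ T, δ ≤ m (s ∩ ((-t + g) +ᵥ s)) := by
  obtain ⟨δ, hδ, recurrent⟩ := exists_le_addContent_inter isSetRing_univ ENNReal.one_ne_top
    (fun s _ ↦ hm.le_one s) hs
  -- Otherwise infinitely many translates of `s` would have pairwise intersections of mean `< δ`.
  by_contra! sparse
  have : Std.Symm fun g h : G ↦ m ((g +ᵥ s) ∩ (h +ᵥ s)) < δ :=
    ⟨fun g h hgh ↦ by rwa [inter_comm]⟩
  obtain ⟨g, -, hg⟩ := exists_seq_of_forall_finset_exists' (fun _ : G ↦ True)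
    (fun g h ↦ m ((g +ᵥ s) ∩ (h +ᵥ s)) < δ) fun T _ ↦ by
      simpa only [hm.inter_vadd, true_and] using sparse T δ hδ
  obtain ⟨i, j, hij, hle⟩ := recurrent (fun n ↦ g n +ᵥ s) (fun _ ↦ mem_univ _)
    fun n ↦ (hm.vadd (g n) s).ge
  exact (hg hij).not_ge hle

end IsInvariantMean

namespace IsInvariantMean

variable {m : AddContent ℝ≥0∞ (univ : Set (Set ℤ))} {E : Set ℤ}

theorem exists_finset_nat_forall_le_inter_vadd (hm : IsInvariantMean ℤ m) (hE : m E ≠ 0) :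
    ∃ (I : Finset ℕ) (δ : ℝ≥0∞), δ ≠ 0 ∧ ∀ j : ℤ, ∃ i ∈ I, δ ≤ m (E ∩ (-(j + i) +ᵥ E)) := by
  obtain ⟨T, δ, hδ, h⟩ := hm.exists_finset_forall_le_inter_vadd hE
  obtain ⟨b, hb⟩ := T.bddBelow
  refine ⟨T.image fun t ↦ (t - b).toNat, δ, hδ, fun j ↦ ?_⟩
  obtain ⟨t, ht, hle⟩ := h (b - j)
  refine ⟨_, Finset.mem_image_of_mem _ ht, ?_⟩
  rwa [Int.toNat_of_nonneg (sub_nonneg.2 (hb ht)),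
    show -(j + (t - b)) = -t + (b - j) by ring]

theorem tsum_mul_inter_vadd_le (hm : IsInvariantMean ℤ m) {w : ℤ → ℝ≥0∞} {C : ℝ≥0∞}
    (hC : ∀ n ∈ E, ∑' k, {k | n + k ∈ E}.indicator w k ≤ C) :
    ∑' k, w k * m (E ∩ (-k +ᵥ E)) ≤ C := by
  have translate (k : ℤ) : -k +ᵥ E = {n | n + k ∈ E} :=
    ext fun n ↦ by rw [mem_neg_vadd_set_iff, vadd_eq_add, add_comm]; rfl
  simp only [translate, ENNReal.tsum_eq_iSup_sum]
  refine iSup_le fun I ↦ ?_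
  have h := sum_mul_addContent_inter_le (m := m) isSetRing_univ I w (a := 0) (b := C)
    (A := fun k ↦ {n | n + k ∈ E}) (fun _ ↦ mem_univ _) (mem_univ E) fun n hn ↦ by
      rw [zero_add]
      exact (ENNReal.sum_le_tsum I).trans (hC n hn)
  simp only [zero_mul, zero_add] at h
  exact h.trans (mul_le_of_le_one_right' (hm.le_one E))

theorem tsum_ne_top (hm : IsInvariantMean ℤ m) (hE : m E ≠ 0) {w : ℤ → ℝ≥0∞} {c C : ℝ≥0∞}
    (hc : c ≠ ⊤) (hw : ∀ k, w k ≤ c * w (k + 1)) (hC : C ≠ ⊤)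
    (hwC : ∀ n ∈ E, ∑' k, {k | n + k ∈ E}.indicator w k ≤ C) :
    ∑' k, w k ≠ ⊤ := by
  obtain ⟨I, δ, hδ, syndetic⟩ := hm.exists_finset_nat_forall_le_inter_vadd hE
  set v : ℤ → ℝ≥0∞ := fun k ↦ w k * m (E ∩ (-k +ᵥ E))
  have growth (i : ℕ) (j : ℤ) : w j ≤ c ^ i * w (j + i) := by
    induction i with
    | zero => simp
    | succ i ih =>
      calc w j ≤ c ^ i * (c * w (j + i + 1)) := ih.trans (by gcongr; exact hw _)
        _ = c ^ (i + 1) * w (j + ↑(i + 1)) := by push_cast; ring_nf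
  have pointwise (j : ℤ) : w j * δ ≤ ∑ i ∈ I, c ^ i * v (j + i) := by
    obtain ⟨i, hi, hδi⟩ := syndetic j
    calc w j * δ ≤ c ^ i * w (j + i) * m (E ∩ (-(j + i) +ᵥ E)) := by
          gcongr; exact growth i j
      _ = c ^ i * v (j + i) := mul_assoc _ _ _
      _ ≤ _ := Finset.single_le_sum (f := fun i : ℕ ↦ c ^ i * v (j + i)) (fun _ _ ↦ zero_le) hi
  have bound : (∑' j, w j) * δ ≤ ∑ i ∈ I, c ^ i * C :=
    calc (∑' j, w j) * δ ≤ ∑' j, ∑ i ∈ I, c ^ i * v (j + i) := by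
          rw [← ENNReal.tsum_mul_right]; exact ENNReal.tsum_le_tsum pointwise
      _ = ∑ i ∈ I, c ^ i * ∑' j, v j := by
          rw [Summable.tsum_finsetSum fun _ _ ↦ ENNReal.summable]
          refine Finset.sum_congr rfl fun i _ ↦ ?_
          exact ENNReal.tsum_mul_left.trans (congrArg _ ((Equiv.addRight (i : ℤ)).tsum_eq v))
      _ ≤ _ := by gcongr; exact hm.tsum_mul_inter_vadd_le hwC
  have bound_ne_top : ∑ i ∈ I, c ^ i * C ≠ ⊤ :=
    ENNReal.sum_ne_top.2 fun i _ ↦ ENNReal.mul_ne_top (ENNReal.pow_ne_top hc) hC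
  intro top
  exact bound_ne_top (top_le_iff.1 (by simpa [top, hδ] using bound))

end IsInvariantMean

/-- A set of natural numbers has positive upper density. -/
def PosUpperDensity (A : Set ℕ) : Prop :=
  0 < limsup (fun N : ℕ ↦ ((A ∩ Icc 1 N).ncard : ℝ) / N) atTop

/-- A continuous linear operator is upper frequently hypercyclic: some orbit visits every nonempty
open set along a set of times of positive upper density. -/
def UpperFreqHC {E : Type*} [NormedAddCommGroup E] [NormedSpace ℝ E] (T : E →L[ℝ] E) : Prop :=
  ∃ φ : E, ∀ U : Set E, IsOpen U → U.Nonempty → PosUpperDensity {n : ℕ | (T ^ n) φ ∈ U}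

theorem ncard_inter_Icc_div_mem_Icc (A : Set ℕ) (N : ℕ) :
    ((A ∩ Icc 1 N).ncard : ℝ) / N ∈ Icc (0 : ℝ) 1 := by
  refine ⟨by positivity, div_le_one_of_le₀ ?_ N.cast_nonneg⟩
  have h : (A ∩ Icc 1 N).ncard ≤ (Icc 1 N).ncard := ncard_le_ncard inter_subset_right
  exact_mod_cast h.trans_eq (by simp)

theorem PosLowerDensity.posUpperDensity {A : Set ℕ} (hA : PosLowerDensity A) :
    PosUpperDensity A :=
  hA.trans_le <| liminf_le_limsup
    (isBoundedUnder_of ⟨1, fun N ↦ (ncard_inter_Icc_div_mem_Icc A N).2⟩)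
    (isBoundedUnder_of ⟨0, fun N ↦ (ncard_inter_Icc_div_mem_Icc A N).1⟩)

theorem FreqHC.upperFreqHC {E : Type*} [NormedAddCommGroup E] [NormedSpace ℝ E] {T : E →L[ℝ] E} :
    FreqHC T → UpperFreqHC T
  | ⟨φ, hφ⟩ => ⟨φ, fun U hU hne ↦ (hφ U hU hne).posUpperDensity⟩

theorem count_Icc_one (N : ℕ) : Measure.count (Icc (1 : ℤ) N) = N := by
  rw [← Finset.coe_Icc, Measure.count_apply_finset]
  simp

theorem isAddFoelner_Icc_one :
    IsAddFoelner ℤ Measure.count atTop fun N : ℕ ↦ Icc (1 : ℤ) N where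
  eventually_measurableSet := .of_forall fun _ ↦ .of_discrete
  eventually_meas_ne_zero := by
    filter_upwards [eventually_ne_atTop 0] with N hN
    simpa only [count_Icc_one, Nat.cast_ne_zero]
  eventually_meas_ne_top := .of_forall fun N ↦ by simp [count_Icc_one]
  tendsto_meas_vadd_symmDiff g := by
    have bound (N : ℕ) : Measure.count ((g +ᵥ Icc (1 : ℤ) N) ∆ Icc 1 N) /
        Measure.count (Icc (1 : ℤ) N) ≤ (4 * g.natAbs : ℕ) / (N : ℝ≥0∞) := by
      set boundary : Finset ℤ :=
        Finset.Ioc (-g.natAbs) g.natAbs ∪ Finset.Ioc (N - g.natAbs : ℤ) (N + g.natAbs)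
      have subset_boundary : (g +ᵥ Icc (1 : ℤ) N) ∆ Icc 1 N ⊆ boundary := by
        intro n
        simp only [boundary, mem_symmDiff, mem_vadd_set_iff_neg_vadd_mem, vadd_eq_add, mem_Icc,
          Finset.coe_union, Finset.coe_Ioc, mem_union, mem_Ioc]
        omega
      have card_boundary : boundary.card ≤ 4 * g.natAbs :=
        (Finset.card_union_le _ _).trans (by simp only [Int.card_Ioc]; omega)
      rw [count_Icc_one]
      gcongr
      calc Measure.count ((g +ᵥ Icc (1 : ℤ) N) ∆ Icc 1 N)
          ≤ Measure.count (boundary : Set ℤ) := measure_mono subset_boundary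
        _ ≤ (4 * g.natAbs : ℕ) := by
            rw [Measure.count_apply_finset]; exact_mod_cast card_boundary
    refine tendsto_of_tendsto_of_tendsto_of_le_of_le tendsto_const_nhds ?_ (fun _ ↦ zero_le) bound
    simpa only [ENNReal.div_top] using ENNReal.Tendsto.const_div ENNReal.tendsto_nat_nhds_top
      (.inr (ENNReal.natCast_ne_top (4 * g.natAbs)))

theorem count_image_natCast_inter_Icc_one (A : Set ℕ) (N : ℕ) :
    Measure.count (Nat.cast '' A ∩ Icc (1 : ℤ) N) = (A ∩ Icc 1 N).ncard := by
  have hfin : (A ∩ Icc 1 N).Finite := (finite_Icc 1 N).inter_of_right A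
  rw [← Nat.cast_one, ← Nat.image_cast_int_Icc, ← image_inter Nat.cast_injective,
    Measure.count_injective_image Nat.cast_injective, Measure.count_apply_finite _ hfin,
    ncard_eq_toFinset_card _ hfin]

theorem PosUpperDensity.exists_isInvariantMean {A : Set ℕ} (hA : PosUpperDensity A) :
    ∃ m : AddContent ℝ≥0∞ (univ : Set (Set ℤ)), IsInvariantMean ℤ m ∧ m (Nat.cast '' A) ≠ 0 := by
  obtain ⟨d, hd, hdA⟩ := exists_between hA
  have : (atTop ⊓ 𝓟 {N : ℕ | d < ((A ∩ Icc 1 N).ncard : ℝ) / N}).NeBot :=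
    frequently_mem_iff_neBot.1 <| frequently_lt_of_lt_limsup
      (isBoundedUnder_of ⟨0, fun N ↦ (ncard_inter_Icc_div_mem_Icc A N).1⟩).isCoboundedUnder_le hdA
  obtain ⟨u, hu⟩ :=
    Ultrafilter.exists_le (atTop ⊓ 𝓟 {N : ℕ | d < ((A ∩ Icc 1 N).ncard : ℝ) / N})
  obtain ⟨m, hm, lim⟩ := exists_isInvariantMean_of_isAddFoelner
    (isAddFoelner_Icc_one.mono (hu.trans inf_le_left) : IsAddFoelner ℤ _ u _)
  refine ⟨m, hm, ((ENNReal.ofReal_pos.2 hd).trans_le (ge_of_tendsto (lim _) ?_)).ne'⟩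
  filter_upwards [(hu.trans inf_le_right) (mem_principal_self _)] with N hN
  calc ENNReal.ofReal d ≤ ENNReal.ofReal (((A ∩ Icc 1 N).ncard : ℝ) / N) :=
        ENNReal.ofReal_le_ofReal hN.le
    _ ≤ (A ∩ Icc 1 N).ncard / N := by
        simpa only [ENNReal.ofReal_natCast] using
          ENNReal.ofReal_div_le (x := (A ∩ Icc 1 N).ncard) N.cast_nonneg
    _ = _ := by rw [count_image_natCast_inter_Icc_one, count_Icc_one]

section RadonNikodym

variable {X : Type*} [MeasurableSpace X] {μ ν ν' : Measure X} {W : Set X}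

theorem dSeq_mul_le [SigmaFinite μ] [SigmaFinite ν] (hμν : μ ≪ ν) (hνμ : ν ≪ μ) {B : Set X}
    (hBW : B ⊆ W) : dSeq μ ν W * μ B ≤ ν B := by
  set S := essSup (μ.rnDeriv ν) (μ.restrict W)
  have le_mul : μ B ≤ S * ν B := by
    have bound : ∀ᵐ x ∂ν.restrict B, μ.rnDeriv ν x ≤ S :=
      (hνμ.restrict B).ae_le (ae_mono (Measure.restrict_mono_set μ hBW) ae_le_essSup)
    calc μ B = ∫⁻ x in B, μ.rnDeriv ν x ∂ν := (Measure.setLIntegral_rnDeriv hμν B).symm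
      _ ≤ ∫⁻ _ in B, S ∂ν := lintegral_mono_ae bound
      _ = S * ν B := setLIntegral_const B S
  calc S⁻¹ * μ B ≤ S⁻¹ * (S * ν B) := by gcongr
    _ ≤ ν B := by rw [← mul_assoc]; exact mul_le_of_le_one_left' (ENNReal.inv_mul_le_one S)

theorem dSeq_le_mul_dSeq [SigmaFinite μ] [SigmaFinite ν] [SigmaFinite ν'] (hμν : μ ≪ ν)
    (hνν' : ν ≪ ν') {c : ℝ≥0∞} (hc₀ : c ≠ 0) (hc : c ≠ ⊤) (h : ν ≤ c • ν') :
    dSeq μ ν W ≤ c * dSeq μ ν' W := by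
  have rnDeriv_le : ∀ᵐ x ∂ν', ν.rnDeriv ν' x ≤ c := by
    refine ae_le_of_forall_setLIntegral_le_of_sigmaFinite (ν.measurable_rnDeriv ν') fun s _ _ ↦ ?_
    rw [setLIntegral_const]
    exact (Measure.setLIntegral_rnDeriv_le s).trans (h s)
  have chain : ∀ᵐ x ∂μ.restrict W, μ.rnDeriv ν' x ≤ c * μ.rnDeriv ν x := by
    refine ae_restrict_of_ae ((hμν.trans hνν').ae_le ?_)
    filter_upwards [rnDeriv_le, Measure.rnDeriv_mul_rnDeriv hμν] with x hx hmul
    rw [← hmul, Pi.mul_apply, mul_comm]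
    gcongr
  have essSup_le : essSup (μ.rnDeriv ν') (μ.restrict W) ≤ c * essSup (μ.rnDeriv ν) (μ.restrict W) :=
    (essSup_mono_ae chain).trans_eq ENNReal.essSup_const_mul
  calc dSeq μ ν W = c * (c * essSup (μ.rnDeriv ν) (μ.restrict W))⁻¹ := by
        rw [ENNReal.mul_inv (.inl hc₀) (.inl hc), ENNReal.mul_inv_cancel_left hc₀ hc, dSeq]
    _ ≤ c * dSeq μ ν' W := by gcongr; exact ENNReal.inv_le_inv.2 essSup_le

end RadonNikodym

section Perm

variable {X : Type*} {g : Equiv.Perm X}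

theorem zimg_coe_perm (g : Equiv.Perm X) (n : ℤ) (B : Set X) : zimg g n B = ⇑(g ^ (-n)) ⁻¹' B := by
  unfold zimg
  split_ifs with h
  · lift n to ℕ using h
    rw [zpow_neg, zpow_natCast, Int.toNat_natCast, Equiv.Perm.iterate_eq_pow]
    exact Equiv.image_eq_preimage_symm _ _
  · obtain ⟨m, hm⟩ := Int.eq_ofNat_of_zero_le (a := -n) (by lia)
    rw [hm, zpow_natCast, Int.toNat_natCast, Equiv.Perm.iterate_eq_pow]

variable [MeasurableSpace X] {μ : Measure X}

theorem quasiMeasurePreserving_zpow (hg : Measure.QuasiMeasurePreserving g μ μ)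
    (hg' : Measure.QuasiMeasurePreserving ⇑g⁻¹ μ μ) :
    ∀ n : ℤ, Measure.QuasiMeasurePreserving ⇑(g ^ n) μ μ
  | (n : ℕ) => by rw [zpow_natCast, ← Equiv.Perm.iterate_eq_pow]; exact hg.iterate n
  | Int.negSucc n => by
      rw [zpow_negSucc, ← inv_pow, ← Equiv.Perm.iterate_eq_pow]; exact hg'.iterate (n + 1)

theorem sigmaFinite_map_zpow [SigmaFinite μ] (hg : Measure.QuasiMeasurePreserving g μ μ)
    (hg' : Measure.QuasiMeasurePreserving ⇑g⁻¹ μ μ) (n : ℤ) : SigmaFinite (μ.map ⇑(g ^ n)) :=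
  MeasurableEquiv.sigmaFinite_map ⟨g ^ n, (quasiMeasurePreserving_zpow hg hg' n).1, by
    rw [← Equiv.Perm.inv_def, ← zpow_neg]
    exact (quasiMeasurePreserving_zpow hg hg' (-n)).1⟩

theorem absolutelyContinuous_map_zpow (hg : Measure.QuasiMeasurePreserving g μ μ)
    (hg' : Measure.QuasiMeasurePreserving ⇑g⁻¹ μ μ) (n : ℤ) : μ ≪ μ.map ⇑(g ^ n) := by
  refine Measure.AbsolutelyContinuous.mk fun s hs h ↦ ?_
  rw [Measure.map_apply (quasiMeasurePreserving_zpow hg hg' n).1 hs] at h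
  have null := (quasiMeasurePreserving_zpow hg hg' (-n)).preimage_null h
  rwa [← preimage_comp, ← Equiv.Perm.coe_mul, ← zpow_add, add_neg_cancel, zpow_zero,
    Equiv.Perm.coe_one, preimage_id] at null

theorem map_zpow_add_one_le (hg : Measure.QuasiMeasurePreserving g μ μ)
    (hg' : Measure.QuasiMeasurePreserving ⇑g⁻¹ μ μ) {c : ℝ≥0∞} (h : μ.map g ≤ c • μ) (n : ℤ) :
    μ.map ⇑(g ^ (n + 1)) ≤ c • μ.map ⇑(g ^ n) := by
  have hgn : Measurable ⇑(g ^ n) := (quasiMeasurePreserving_zpow hg hg' n).1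
  rw [zpow_add_one, Equiv.Perm.coe_mul, ← Measure.map_map hgn hg.1, ← Measure.map_smul]
  exact Measure.map_mono h hgn

theorem dSeq_map_zpow_add_one_le [SigmaFinite μ] (hg : Measure.QuasiMeasurePreserving g μ μ)
    (hg' : Measure.QuasiMeasurePreserving ⇑g⁻¹ μ μ) {c : ℝ≥0∞} (hc₀ : c ≠ 0) (hc : c ≠ ⊤)
    (h : μ.map g ≤ c • μ) (n : ℤ) (W : Set X) :
    dSeq μ (μ.map ⇑(g ^ (n + 1))) W ≤ c * dSeq μ (μ.map ⇑(g ^ n)) W := by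
  have sigmaFinite_map := sigmaFinite_map_zpow hg hg'
  have ac_map := absolutelyContinuous_map_zpow hg hg'
  exact dSeq_le_mul_dSeq (ac_map _)
    ((quasiMeasurePreserving_zpow hg hg' _).absolutelyContinuous.trans (ac_map n)) hc₀ hc
    (map_zpow_add_one_le hg hg' h n)

end Perm

namespace MeasSystem

variable {X : Type*} [MeasurableSpace X] {μ : Measure X} {g : Equiv.Perm X} {c : ℝ≥0∞}

theorem quasiMeasurePreserving {f : X → X} (h : MeasSystem μ f c) :
    Measure.QuasiMeasurePreserving f μ μ := by
  obtain ⟨-, -, -, hf, -, null, -⟩ := h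
  exact ⟨hf, .mk fun s hs h0 ↦ by rw [Measure.map_apply hf hs]; exact (null s hs).2 h0⟩

theorem quasiMeasurePreserving_inv (h : MeasSystem μ g c) :
    Measure.QuasiMeasurePreserving ⇑g⁻¹ μ μ := by
  obtain ⟨-, -, -, -, image, null, -⟩ := h
  have hg' : Measurable ⇑g⁻¹ := fun s hs ↦ by
    simpa [Equiv.image_eq_preimage_symm] using image s hs
  refine ⟨hg', .mk fun s hs h0 ↦ ?_⟩
  rw [Measure.map_apply hg' hs, ← null _ (hg' hs)]
  simpa [← preimage_comp, Equiv.Perm.inv_def]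

theorem map_le_smul {f : X → X} (h : MeasSystem μ f c) : μ.map f ≤ c • μ := by
  obtain ⟨-, -, -, hf, -, -, -, -, le⟩ := h
  refine Measure.le_iff.2 fun s hs ↦ ?_
  rw [Measure.map_apply hf hs]
  exact le s hs

end MeasSystem

section Lp

variable {X : Type*} [MeasurableSpace X] {μ : Measure X} {p : ℝ≥0∞} {W : Set X}

theorem measure_symmDiff_le_eLpNorm_sub_indicator (hp₀ : p ≠ 0) (hp : p ≠ ⊤)
    (hW : MeasurableSet W) {ψ : X → ℝ} (hψ : AEStronglyMeasurable ψ μ) :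
    μ ({x | 2⁻¹ ≤ ‖ψ x‖ₑ} ∆ W) ≤ (2 * eLpNorm (ψ - W.indicator fun _ ↦ 1) p μ) ^ p.toReal := by
  set χ : X → ℝ := W.indicator fun _ ↦ 1 with hχ
  have subset : {x | 2⁻¹ ≤ ‖ψ x‖ₑ} ∆ W ⊆ {x | 2⁻¹ ≤ ‖(ψ - χ) x‖ₑ} := by
    rintro x (⟨hx, hxW⟩ | ⟨hxW, hx⟩)
    · simpa [hχ, hxW] using hx
    · by_contra hx'
      have lt_one : ‖ψ x - (ψ - χ) x‖ₑ < 1 :=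
        enorm_sub_le.trans_lt <| (ENNReal.add_lt_add (not_le.1 hx) (not_le.1 hx')).trans_eq
          ENNReal.inv_two_add_inv_two
      simp [hχ, hxW] at lt_one
  calc μ ({x | 2⁻¹ ≤ ‖ψ x‖ₑ} ∆ W)
      ≤ μ {x | 2⁻¹ ≤ ‖(ψ - χ) x‖ₑ} := measure_mono subset
    _ ≤ 2⁻¹⁻¹ ^ p.toReal * eLpNorm (ψ - χ) p μ ^ p.toReal :=
        meas_ge_le_mul_pow_eLpNorm_enorm μ hp₀ hp
          (hψ.sub (aestronglyMeasurable_const.indicator hW)) (by simp) (by simp)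
    _ = (2 * eLpNorm (ψ - χ) p μ) ^ p.toReal := by
        rw [inv_inv, ENNReal.mul_rpow_of_nonneg _ _ p.toReal_nonneg]

theorem eventually_measure_symmDiff_le [Fact (1 ≤ p)] (hp : p ≠ ⊤) (hW : MeasurableSet W)
    (hμW : μ W ≠ ⊤) {η : ℝ≥0∞} (hη : η ≠ 0) :
    ∀ᶠ ψ in 𝓝 (indicatorConstLp p hW hμW (1 : ℝ)), μ ({x | 2⁻¹ ≤ ‖ψ x‖ₑ} ∆ W) ≤ η := by
  have hp₀ : p ≠ 0 := (zero_lt_one.trans_le Fact.out).ne'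
  have lim : Tendsto (fun ψ : Lp ℝ p μ ↦
      (2 * edist ψ (indicatorConstLp p hW hμW (1 : ℝ))) ^ p.toReal)
      (𝓝 (indicatorConstLp p hW hμW (1 : ℝ))) (𝓝 0) := by
    refine Continuous.tendsto' ?_ _ _ (by simp [ENNReal.toReal_pos hp₀ hp])
    exact ENNReal.continuous_rpow_const.comp
      ((ENNReal.continuous_const_mul ENNReal.ofNat_ne_top).comp
        (continuous_id.edist continuous_const))
  filter_upwards [lim.eventually_le_const hη.bot_lt] with ψ hψ
  refine (measure_symmDiff_le_eLpNorm_sub_indicator hp₀ hp hW (Lp.aestronglyMeasurable ψ)).trans ?_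
  rw [Lp.edist_def] at hψ
  rwa [eLpNorm_congr_ae (EventuallyEq.rfl.sub indicatorConstLp_coeFn)] at hψ

theorem coeFn_pow_ae_eq_comp_iterate [Fact (1 ≤ p)] {f : X → X}
    (hf : Measure.QuasiMeasurePreserving f μ μ) {T : Lp ℝ p μ →L[ℝ] Lp ℝ p μ}
    (hT : ∀ φ : Lp ℝ p μ, T φ =ᵐ[μ] fun x ↦ φ (f x)) (φ : Lp ℝ p μ) (n : ℕ) :
    (T ^ n) φ =ᵐ[μ] fun x ↦ φ (f^[n] x) := by
  induction n with
  | zero => rfl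
  | succ n ih =>
    rw [pow_succ']
    exact (hT _).trans (hf.ae_eq_comp ih)

theorem UpperFreqHC.exists_measure_preimage_symmDiff_le [Fact (1 ≤ p)] (hp : p ≠ ⊤) {f : X → X}
    (hf : Measure.QuasiMeasurePreserving f μ μ) {T : Lp ℝ p μ →L[ℝ] Lp ℝ p μ}
    (hT : ∀ φ : Lp ℝ p μ, T φ =ᵐ[μ] fun x ↦ φ (f x)) (hfh : UpperFreqHC T)
    (hW : MeasurableSet W) (hμW : μ W ≠ ⊤) {η : ℝ≥0∞} (hη : η ≠ 0) :
    ∃ (A : Set X) (S : Set ℕ), MeasurableSet A ∧ PosUpperDensity S ∧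
      ∀ n ∈ S, μ ((f^[n] ⁻¹' A) ∆ W) ≤ η := by
  obtain ⟨φ, hφ⟩ := hfh
  obtain ⟨U, hUη, hU, hWU⟩ := eventually_nhds_iff.1 (eventually_measure_symmDiff_le hp hW hμW hη)
  refine ⟨{x | 2⁻¹ ≤ ‖φ x‖ₑ}, {n | (T ^ n) φ ∈ U},
    measurableSet_le measurable_const (Lp.stronglyMeasurable φ).measurable.enorm,
    hφ U hU ⟨_, hWU⟩, fun n hn ↦ (measure_congr (.symmDiff ?_ .rfl)).trans_le (hUη _ hn)⟩
  filter_upwards [coeFn_pow_ae_eq_comp_iterate hf hT φ n] with x hx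
  exact congrArg (fun y ↦ 2⁻¹ ≤ ‖y‖ₑ) hx.symm

end Lp

section SymmDiff

variable {X : Type*} [MeasurableSpace X] {μ : Measure X} {P W : Set X}

theorem half_measure_le_measure_inter (hμW : μ W ≠ ⊤) (h : μ (P ∆ W) ≤ μ W / 2) :
    μ W / 2 ≤ μ (W ∩ P) := by
  refine (ENNReal.add_le_add_iff_right (ENNReal.div_ne_top hμW two_ne_zero)).1 ?_
  calc μ W / 2 + μ W / 2 = μ W := ENNReal.add_halves _
    _ ≤ μ (W ∩ P) + μ (W \ P) := measure_le_inter_add_sdiff μ W P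
    _ ≤ μ (W ∩ P) + μ W / 2 := by gcongr; exact (measure_mono subset_union_right).trans h

theorem measure_le_three_mul_half (h : μ (P ∆ W) ≤ μ W / 2) : μ P ≤ 3 * (μ W / 2) :=
  calc μ P ≤ μ (P ∩ W) + μ (P \ W) := measure_le_inter_add_sdiff μ P W
    _ ≤ μ W + μ W / 2 :=
        add_le_add (measure_mono inter_subset_right) ((measure_mono subset_union_left).trans h)
    _ = 3 * (μ W / 2) := by
        nth_rw 1 [← ENNReal.add_halves (μ W)]
        ring

end SymmDiff

section Wandering

variable {X : Type*} [MeasurableSpace X] {μ : Measure X} {g : Equiv.Perm X} {A W : Set X}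

theorem Wandering.tsum_map_inter_le (hw : Wandering g W)
    (hg : Measure.QuasiMeasurePreserving g μ μ) (hg' : Measure.QuasiMeasurePreserving ⇑g⁻¹ μ μ)
    (hW : MeasurableSet W) (hA : MeasurableSet A) (n : ℤ) :
    ∑' k : ℤ, μ.map ⇑(g ^ (-k)) (W ∩ ⇑(g ^ (n + k)) ⁻¹' A) ≤ μ (⇑(g ^ n) ⁻¹' A) := by
  have measurable_zpow (k : ℤ) : Measurable ⇑(g ^ k) := (quasiMeasurePreserving_zpow hg hg' k).1
  have measurable_piece (k : ℤ) : MeasurableSet (W ∩ ⇑(g ^ (n + k)) ⁻¹' A) :=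
    hW.inter (measurable_zpow _ hA)
  simp only [Measure.map_apply (measurable_zpow _) (measurable_piece _)]
  refine (tsum_meas_le_meas_iUnion_of_disjoint μ (fun k ↦ measurable_zpow _ (measurable_piece k))
    fun j k hjk ↦ ?_).trans (measure_mono (iUnion_subset fun k ↦ ?_))
  · have h := hw hjk
    simp only [zimg_coe_perm] at h
    exact h.mono (preimage_mono inter_subset_left) (preimage_mono inter_subset_left)
  · have comp : ⇑(g ^ (n + k)) ∘ ⇑(g ^ (-k)) = ⇑(g ^ n) := by
      rw [← Equiv.Perm.coe_mul, ← zpow_add, add_neg_cancel_right]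
    rw [← comp, preimage_comp]
    exact preimage_mono inter_subset_right

theorem Wandering.tsum_indicator_dSeq_le [SigmaFinite μ] (hw : Wandering g W)
    (hg : Measure.QuasiMeasurePreserving g μ μ) (hg' : Measure.QuasiMeasurePreserving ⇑g⁻¹ μ μ)
    (hW : MeasurableSet W) (hA : MeasurableSet A) (hW₀ : μ W ≠ 0) (hμW : μ W ≠ ⊤) {E : Set ℤ}
    (hE : ∀ n ∈ E, μ ((⇑(g ^ n) ⁻¹' A) ∆ W) ≤ μ W / 2) {n : ℤ} (hn : n ∈ E) :
    ∑' k, {k | n + k ∈ E}.indicator (fun k ↦ dSeq μ (μ.map ⇑(g ^ (-k))) W) k ≤ 3 := by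
  have term_le (k : ℤ) : {k | n + k ∈ E}.indicator (fun k ↦ dSeq μ (μ.map ⇑(g ^ (-k))) W) k *
      (μ W / 2) ≤ μ.map ⇑(g ^ (-k)) (W ∩ ⇑(g ^ (n + k)) ⁻¹' A) := by
    by_cases hk : k ∈ {k | n + k ∈ E}
    · rw [indicator_of_mem hk]
      have := sigmaFinite_map_zpow hg hg' (-k)
      exact (mul_le_mul_right (half_measure_le_measure_inter hμW (hE _ hk)) _).trans <|
        dSeq_mul_le (absolutelyContinuous_map_zpow hg hg' _)
          (quasiMeasurePreserving_zpow hg hg' _).absolutelyContinuous inter_subset_left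
    · rw [indicator_of_notMem hk, zero_mul]
      exact zero_le
  refine (ENNReal.mul_le_mul_iff_left (ENNReal.half_pos hW₀).ne'
    (ENNReal.div_ne_top hμW two_ne_zero)).1 ?_
  calc (∑' k, {k | n + k ∈ E}.indicator (fun k ↦ dSeq μ (μ.map ⇑(g ^ (-k))) W) k) * (μ W / 2)
      ≤ ∑' k : ℤ, μ.map ⇑(g ^ (-k)) (W ∩ ⇑(g ^ (n + k)) ⁻¹' A) := by
        rw [← ENNReal.tsum_mul_right]; exact ENNReal.tsum_le_tsum term_le
    _ ≤ μ (⇑(g ^ n) ⁻¹' A) := hw.tsum_map_inter_le hg hg' hW hA n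
    _ ≤ 3 * (μ W / 2) := measure_le_three_mul_half (hE n hn)

end Wandering

theorem stmt_6_general {X : Type*} [MeasurableSpace X] (μ : Measure X) (f : X → X) (c : ℝ≥0∞)
    (hsys : MeasSystem μ f c) (p : ℝ≥0∞) [Fact (1 ≤ p)] (hp : p ≠ ⊤)
    (T : Lp ℝ p μ →L[ℝ] Lp ℝ p μ)
    (hT : ∀ φ : Lp ℝ p μ, (T φ : X → ℝ) =ᵐ[μ] fun x => (φ : X → ℝ) (f x))
    (hfh : UpperFreqHC T)
    (ν : ℤ → Measure X) (hν : ∀ (n : ℤ) (B : Set X), MeasurableSet B → ν n B = μ (zimg f n B))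
    (W : Set X) (hWm : MeasurableSet W) (hWw : Wandering f W)
    (hW0 : 0 < μ W) (hWfin : μ W ≠ ⊤) :
    ∑' n : ℤ, dSeq μ (ν n) W ≠ ⊤ := by
  obtain ⟨hσ, -, hbij, -, -, -, hc₀, hc, -⟩ := id hsys
  obtain ⟨g, rfl⟩ : ∃ g : Equiv.Perm X, ⇑g = f := ⟨.ofBijective f hbij, rfl⟩
  have hg := hsys.quasiMeasurePreserving
  have hg' := hsys.quasiMeasurePreserving_inv
  have ν_eq (n : ℤ) : ν n = μ.map ⇑(g ^ (-n)) := Measure.ext fun B hB ↦ by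
    rw [hν n B hB, zimg_coe_perm, Measure.map_apply (quasiMeasurePreserving_zpow hg hg' _).1 hB]
  obtain ⟨A, S, hA, hS, hAS⟩ := hfh.exists_measure_preimage_symmDiff_le hp hg hT hWm hWfin
    (ENNReal.half_pos hW0.ne').ne'
  have hAS' : ∀ n ∈ Nat.cast '' S, μ ((⇑(g ^ (n : ℤ)) ⁻¹' A) ∆ W) ≤ μ W / 2 := by
    rintro _ ⟨n, hn, rfl⟩
    rw [zpow_natCast, ← Equiv.Perm.iterate_eq_pow]
    exact hAS n hn
  obtain ⟨m, hm, hmS⟩ := hS.exists_isInvariantMean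
  have growth (k : ℤ) : dSeq μ (ν k) W ≤ c * dSeq μ (ν (k + 1)) W := by
    have h := dSeq_map_zpow_add_one_le hg hg' hc₀.ne' hc hsys.map_le_smul (-(k + 1)) W
    rwa [neg_add_rev, neg_add_cancel_comm, ← neg_add_rev, ← ν_eq, ← ν_eq] at h
  refine hm.tsum_ne_top hmS hc growth (C := 3) ENNReal.ofNat_ne_top fun n hn ↦ ?_
  simp only [ν_eq]
  exact hWw.tsum_indicator_dSeq_le hg hg' hWm hA hW0.ne' hWfin hAS' hn

/-- If the composition operator `T_f` on `L^p(X)` of a measurable system is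
frequently hypercyclic, then for every wandering set `W` of finite positive measure,
`∑_{n∈ℤ} ‖dμ/d(μ∘fⁿ)|_W‖_∞⁻¹ < ∞`. Here `ν n` is the measure `B ↦ μ(fⁿ(B))`. -/
theorem stmt_6 {X : Type*} [MeasurableSpace X] (μ : Measure X) (f : X → X) (c : ℝ≥0∞)
    (hsys : MeasSystem μ f c) (p : ℝ≥0∞) [Fact (1 ≤ p)] (hp : p ≠ ⊤)
    (T : Lp ℝ p μ →L[ℝ] Lp ℝ p μ)
    (hT : ∀ φ : Lp ℝ p μ, (T φ : X → ℝ) =ᵐ[μ] fun x => (φ : X → ℝ) (f x))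
    (hfh : FreqHC T)
    (ν : ℤ → Measure X) (hν : ∀ (n : ℤ) (B : Set X), MeasurableSet B → ν n B = μ (zimg f n B))
    (W : Set X) (hWm : MeasurableSet W) (hWw : Wandering f W)
    (hW0 : 0 < μ W) (hWfin : μ W ≠ ⊤) :
    ∑' n : ℤ, dSeq μ (ν n) W ≠ ⊤ :=
  stmt_6_general μ f c hsys p hp T hT hfh.upperFreqHC ν hν W hWm hWw hW0 hWfin
end
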